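/- arXiv:1411.2567 — 5 statements merged into one kernel-verified Lean document; each statement's English description precedes it below -/
import Mathlib

section
/- Let Ω ⊆ ℝⁿ be open and u : Ω → ℝ continuous. Then the set { x ∈ Ω : J²⁺u(x) ≠ ∅ } is dense in Ω (and, symmetrically, so is { x ∈ Ω : J²⁻u(x) ≠ ∅ }). -/
/-!
Near a point `x₀ ∈ Ω`, the function `y ↦ u y - C ‖y - x₀‖²` attains its maximum over a small closed
ball `closedBall x₀ r ⊆ Ω`. If `C r²` exceeds the oscillation of `u` above `u x₀`, the maximum is
attained at an interior point `x` of the ball, where `u` is touched from above by the paraboloid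
`y ↦ u x + C (‖y - x₀‖² - ‖x - x₀‖²)`. Hence `(2C (x - x₀), 2C I)` is in the super-jet of `u` at
`x`. The statement for sub-jets follows by applying this to `-u`.
-/

open scoped RealInnerProductSpace
open Filter

noncomputable section

/-- The quadratic form `z ↦ ⟨Xz, z⟩` of a matrix `X` on `ℝⁿ`. -/
def quadForm {n : ℕ} (X : Matrix (Fin n) (Fin n) ℝ) (z : EuclideanSpace ℝ (Fin n)) : ℝ :=
  ⟪Matrix.toEuclideanLin X z, z⟫

/-- Second-order super-jet `J²⁺u(x)` of `u : Ω → ℝ` at `x` (relative to the set `Ω`):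
`(p,X) ∈ J²⁺u(x)` iff `X` is symmetric and
`u(x+z) ≤ u(x) + p·z + ½⟨Xz,z⟩ + o(|z|²)` as `z → 0` within `Ω`. -/
def J2plus {n : ℕ} (Ω : Set (EuclideanSpace ℝ (Fin n))) (u : EuclideanSpace ℝ (Fin n) → ℝ)
    (x p : EuclideanSpace ℝ (Fin n)) (X : Matrix (Fin n) (Fin n) ℝ) : Prop :=
  X.IsSymm ∧
  ∀ ε > 0, ∃ δ > 0, ∀ z : EuclideanSpace ℝ (Fin n), ‖z‖ < δ → x + z ∈ Ω →
    u (x + z) ≤ u x + ⟪p, z⟫ + (1 / 2) * quadForm X z + ε * ‖z‖ ^ 2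

/-- Second-order sub-jet `J²⁻u(x)` of `u : Ω → ℝ` at `x` (relative to the set `Ω`). -/
def J2minus {n : ℕ} (Ω : Set (EuclideanSpace ℝ (Fin n))) (u : EuclideanSpace ℝ (Fin n) → ℝ)
    (x p : EuclideanSpace ℝ (Fin n)) (X : Matrix (Fin n) (Fin n) ℝ) : Prop :=
  X.IsSymm ∧
  ∀ ε > 0, ∃ δ > 0, ∀ z : EuclideanSpace ℝ (Fin n), ‖z‖ < δ → x + z ∈ Ω →
    u x + ⟪p, z⟫ + (1 / 2) * quadForm X z - ε * ‖z‖ ^ 2 ≤ u (x + z)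

lemma quadForm_smul_one {n : ℕ} (c : ℝ) (z : EuclideanSpace ℝ (Fin n)) :
    quadForm (c • (1 : Matrix (Fin n) (Fin n) ℝ)) z = c * ‖z‖ ^ 2 := by
  simp [quadForm, Matrix.toLpLin_one, inner_smul_left]

lemma quadForm_neg {n : ℕ} (X : Matrix (Fin n) (Fin n) ℝ) (z : EuclideanSpace ℝ (Fin n)) :
    quadForm (-X) z = -quadForm X z := by
  simp [quadForm]

/-- The negative of an element of the super-jet of `-u` is in the sub-jet of `u`. -/
lemma J2minus_of_J2plus_neg {n : ℕ} {Ω : Set (EuclideanSpace ℝ (Fin n))}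
    {u : EuclideanSpace ℝ (Fin n) → ℝ} {x p : EuclideanSpace ℝ (Fin n)}
    {X : Matrix (Fin n) (Fin n) ℝ} (h : J2plus Ω (fun y => -u y) x p X) :
    J2minus Ω u x (-p) (-X) := by
  refine ⟨h.1.neg, fun ε hε => ?_⟩
  obtain ⟨δ, hδ, H⟩ := h.2 ε hε
  refine ⟨δ, hδ, fun z hz hxz => ?_⟩
  have := H z hz hxz
  rw [quadForm_neg, inner_neg_left]
  linarith

lemma subset_closure_J2plus {n : ℕ} (Ω : Set (EuclideanSpace ℝ (Fin n))) (hΩ : IsOpen Ω)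
    (u : EuclideanSpace ℝ (Fin n) → ℝ) (hu : ContinuousOn u Ω) :
    Ω ⊆ closure {x ∈ Ω | ∃ p X, J2plus Ω u x p X} := by
  intro x₀ hx₀
  rw [Metric.mem_closure_iff]
  intro ε hε
  obtain ⟨ρ, hρ, hball⟩ := Metric.isOpen_iff.1 hΩ x₀ hx₀
  obtain ⟨r, hr, hrm⟩ := exists_between (lt_min hε hρ)
  have hrε : r < ε := hrm.trans_le (min_le_left _ _)
  have hrΩ : Metric.closedBall x₀ r ⊆ Ω :=
    (Metric.closedBall_subset_ball (hrm.trans_le (min_le_right _ _))).trans hball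
  have hK : IsCompact (Metric.closedBall x₀ r) := isCompact_closedBall x₀ r
  have hne : (Metric.closedBall x₀ r).Nonempty := ⟨x₀, Metric.mem_closedBall_self hr.le⟩
  obtain ⟨m, -, hm⟩ := hK.exists_isMaxOn hne (hu.mono hrΩ)
  -- `C r² = u m - u x₀ + 1` makes the penalized function smaller on the sphere than at `x₀`.
  obtain ⟨C, hC⟩ : ∃ C : ℝ, C * r ^ 2 = u m - u x₀ + 1 :=
    ⟨(u m - u x₀ + 1) / r ^ 2, by field_simp⟩
  obtain ⟨x, hxK, hx⟩ := hK.exists_isMaxOn (f := fun y => u y - C * ‖y - x₀‖ ^ 2) hne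
    ((hu.mono hrΩ).sub (by fun_prop))
  have hmx : u x ≤ u m := hm hxK
  have h0x : u x₀ - C * ‖x₀ - x₀‖ ^ 2 ≤ u x - C * ‖x - x₀‖ ^ 2 :=
    hx (Metric.mem_closedBall_self hr.le)
  have hxr : ‖x - x₀‖ < r := by
    refine lt_of_le_of_ne (mem_closedBall_iff_norm.1 hxK) fun h => ?_
    rw [h, hC] at h0x
    simp at h0x
    linarith
  refine ⟨x, ⟨hrΩ hxK, (2 * C) • (x - x₀), (2 * C) • 1, ?_, fun η hη => ?_⟩, ?_⟩
  · exact Matrix.isSymm_one.smul _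
  · refine ⟨r - ‖x - x₀‖, sub_pos.2 hxr, fun z hz _ => ?_⟩
    have hsplit : x + z - x₀ = (x - x₀) + z := by abel
    have hmem : x + z ∈ Metric.closedBall x₀ r := by
      rw [mem_closedBall_iff_norm, hsplit]
      linarith [norm_add_le (x - x₀) z]
    have hz' : u (x + z) - C * ‖x + z - x₀‖ ^ 2 ≤ u x - C * ‖x - x₀‖ ^ 2 := hx hmem
    rw [hsplit, norm_add_sq_real] at hz'
    rw [quadForm_smul_one, real_inner_smul_left]
    have : 0 ≤ η * ‖z‖ ^ 2 := by positivity
    linarith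
  · rw [dist_comm, dist_eq_norm]
    exact hxr.trans hrε

/-- for a continuous `u` on an open set `Ω`, the set of points with nonempty
second-order super-jet is dense in `Ω`, and so is the set of points with nonempty sub-jet. -/
theorem stmt_3 {n : ℕ} (Ω : Set (EuclideanSpace ℝ (Fin n))) (hΩ : IsOpen Ω)
    (u : EuclideanSpace ℝ (Fin n) → ℝ) (hu : ContinuousOn u Ω) :
    Ω ⊆ closure {x ∈ Ω | ∃ p X, J2plus Ω u x p X} ∧
      Ω ⊆ closure {x ∈ Ω | ∃ p X, J2minus Ω u x p X} := by
  refine ⟨subset_closure_J2plus Ω hΩ u hu, ?_⟩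
  refine (subset_closure_J2plus Ω hΩ (fun y => -u y) hu.neg).trans (closure_mono ?_)
  rintro x ⟨hx, p, X, h⟩
  exact ⟨hx, -p, -X, J2minus_of_J2plus_neg h⟩

end
end

section
/- Let σ : (0,∞) → ℝ be continuous, non-decreasing, with σ(t) → 0 as t → 0⁺. Then there exists a twice continuously differentiable function τ : (0,∞) → ℝ such that σ(t) ≤ τ(t) ≤ 8 σ(4t) for all t > 0. (In fact τ(t) := (1/(2t²)) ∫₀^{4t} ∫₀^{r} σ(s) ds dr works.) -/
open Filter

noncomputable section

/-!
Extend `σ` by `0` to a continuous, non-decreasing, non-negative function `s` on `ℝ`, and let `F` be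
the primitive of `s` and `G` the primitive of `F`, both vanishing at `0`. Then `G` is `C²`, and
`τ t = G (4t) / (2t²)` works. By monotonicity of `s` and `F`,
`G (4t) ≥ ∫ r in 2t..4t, F r ≥ 2t F (2t)` and `F (2t) ≥ ∫ r in t..2t, s r ≥ t σ t`,
whereas `G (4t) ≤ 4t F (4t) ≤ (4t)² σ (4t)`.
-/

/-- The extension of `σ` by `0` to `(-∞, 0]`. -/
def extZero (σ : ℝ → ℝ) : ℝ → ℝ := (Set.Ioi (0 : ℝ)).indicator σ

lemma extZero_of_pos (σ : ℝ → ℝ) {x : ℝ} (hx : 0 < x) : extZero σ x = σ x :=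
  Set.indicator_of_mem (Set.mem_Ioi.2 hx) σ

lemma extZero_of_nonpos (σ : ℝ → ℝ) {x : ℝ} (hx : x ≤ 0) : extZero σ x = 0 :=
  Set.indicator_of_notMem (by simpa using hx) σ

lemma nonneg_of_tendsto {σ : ℝ → ℝ} (hmono : MonotoneOn σ (Set.Ioi 0))
    (h0 : Tendsto σ (nhdsWithin 0 (Set.Ioi 0)) (nhds 0)) {t : ℝ} (ht : 0 < t) : 0 ≤ σ t := by
  refine le_of_tendsto h0 ?_
  filter_upwards [Ioc_mem_nhdsGT ht] with x hx
  exact hmono hx.1 ht hx.2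

lemma extZero_nonneg {σ : ℝ → ℝ} (hmono : MonotoneOn σ (Set.Ioi 0))
    (h0 : Tendsto σ (nhdsWithin 0 (Set.Ioi 0)) (nhds 0)) (x : ℝ) : 0 ≤ extZero σ x :=
  Set.indicator_nonneg (fun _ ht => nonneg_of_tendsto hmono h0 ht) x

lemma extZero_monotone {σ : ℝ → ℝ} (hmono : MonotoneOn σ (Set.Ioi 0))
    (h0 : Tendsto σ (nhdsWithin 0 (Set.Ioi 0)) (nhds 0)) : Monotone (extZero σ) := by
  intro x y hxy
  rcases le_or_gt x 0 with hx | hx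
  · rw [extZero_of_nonpos σ hx]
    exact extZero_nonneg hmono h0 y
  · have hy : 0 < y := hx.trans_le hxy
    rw [extZero_of_pos σ hx, extZero_of_pos σ hy]
    exact hmono hx hy hxy

lemma extZero_continuous {σ : ℝ → ℝ} (hcont : ContinuousOn σ (Set.Ioi 0))
    (h0 : Tendsto σ (nhdsWithin 0 (Set.Ioi 0)) (nhds 0)) : Continuous (extZero σ) := by
  rw [continuous_iff_continuousAt]
  intro x
  rcases lt_trichotomy x 0 with hx | rfl | hx
  · have h : extZero σ =ᶠ[nhds x] fun _ => 0 := by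
      filter_upwards [Iio_mem_nhds hx] with y hy
      exact extZero_of_nonpos σ (le_of_lt hy)
    exact continuousAt_const.congr h.symm
  · refine continuousAt_iff_continuous_left'_right'.2 ⟨?_, ?_⟩ <;>
      rw [ContinuousWithinAt, extZero_of_nonpos σ le_rfl]
    · refine tendsto_const_nhds.congr' ?_
      filter_upwards [self_mem_nhdsWithin] with y hy
      exact (extZero_of_nonpos σ (le_of_lt hy)).symm
    · refine h0.congr' ?_
      filter_upwards [self_mem_nhdsWithin] with y hy
      exact (extZero_of_pos σ hy).symm
  · have h : extZero σ =ᶠ[nhds x] σ := by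
      filter_upwards [Ioi_mem_nhds hx] with y hy
      exact extZero_of_pos σ hy
    exact (hcont.continuousAt (Ioi_mem_nhds hx)).congr h.symm

/-- The primitive of `f` that vanishes at `0`. -/
def primitive (f : ℝ → ℝ) (x : ℝ) : ℝ := ∫ r in (0 : ℝ)..x, f r

lemma hasDerivAt_primitive {f : ℝ → ℝ} (hf : Continuous f) (x : ℝ) :
    HasDerivAt (primitive f) (f x) x :=
  (hf.integral_hasStrictDerivAt 0 x).hasDerivAt

lemma primitive_continuous {f : ℝ → ℝ} (hf : Continuous f) : Continuous (primitive f) :=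
  continuous_iff_continuousAt.2 fun x => (hasDerivAt_primitive hf x).continuousAt

lemma primitive_contDiff {f : ℝ → ℝ} {n : ℕ} (hf : ContDiff ℝ n f) :
    ContDiff ℝ (n + 1) (primitive f) := by
  refine contDiff_succ_iff_deriv.2
    ⟨fun x => (hasDerivAt_primitive hf.continuous x).differentiableAt, by simp, ?_⟩
  rwa [funext fun x => (hasDerivAt_primitive hf.continuous x).deriv]

lemma primitive_sub_bounds {f : ℝ → ℝ} (hf : Continuous f) {a b : ℝ} (hab : a ≤ b)
    (hm : MonotoneOn f (Set.Icc a b)) :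
    (b - a) * f a ≤ primitive f b - primitive f a ∧
      primitive f b - primitive f a ≤ (b - a) * f b := by
  have e : primitive f b - primitive f a = ∫ r in a..b, f r :=
    intervalIntegral.integral_interval_sub_left (hf.intervalIntegrable _ _)
      (hf.intervalIntegrable _ _)
  rw [e]
  constructor
  · calc (b - a) * f a = ∫ _ in a..b, f a := by simp
      _ ≤ ∫ r in a..b, f r :=
        intervalIntegral.integral_mono_on hab (by simp) (hf.intervalIntegrable _ _)
          fun r hr => hm (Set.left_mem_Icc.2 hab) hr hr.1
  · calc (∫ r in a..b, f r) ≤ ∫ _ in a..b, f b :=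
        intervalIntegral.integral_mono_on hab (hf.intervalIntegrable _ _) (by simp)
          fun r hr => hm hr (Set.right_mem_Icc.2 hab) hr.2
      _ = (b - a) * f b := by simp

lemma primitive_zero (f : ℝ → ℝ) : primitive f 0 = 0 := intervalIntegral.integral_same

lemma primitive_monotone {f : ℝ → ℝ} (hf : Continuous f) (hn : ∀ x, 0 ≤ f x) :
    Monotone (primitive f) :=
  monotone_of_hasDerivAt_nonneg (hasDerivAt_primitive hf) hn

/-- mollifying the remainder: if `σ : (0,∞) → ℝ` is continuous,
non-decreasing, and `σ(t) → 0` as `t → 0⁺`, then there is a `C²` function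
`τ : (0,∞) → ℝ` with `σ(t) ≤ τ(t) ≤ 8σ(4t)` for all `t > 0`. -/
theorem stmt_5 (σ : ℝ → ℝ) (hcont : ContinuousOn σ (Set.Ioi 0))
    (hmono : MonotoneOn σ (Set.Ioi 0))
    (h0 : Tendsto σ (nhdsWithin 0 (Set.Ioi 0)) (nhds 0)) :
    ∃ τ : ℝ → ℝ, ContDiffOn ℝ 2 τ (Set.Ioi 0) ∧
      ∀ t > (0 : ℝ), σ t ≤ τ t ∧ τ t ≤ 8 * σ (4 * t) := by
  have sc := extZero_continuous hcont h0
  have sm := extZero_monotone hmono h0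
  have sn := extZero_nonneg hmono h0
  set s := extZero σ with hs
  have Fc := primitive_continuous sc
  have Fm := primitive_monotone sc sn
  have F0 := primitive_zero s
  set F := primitive s with hF
  have Fn : ∀ x, 0 ≤ x → 0 ≤ F x := fun x hx => F0 ▸ Fm hx
  have G0 := primitive_zero F
  have GC : ContDiff ℝ 2 (primitive F) := by
    have h1 : ContDiff ℝ (1 : ℕ) F := by
      simpa using primitive_contDiff (n := 0) (by simpa using sc)
    simpa [one_add_one_eq_two] using primitive_contDiff h1
  set G := primitive F with hG
  refine ⟨fun t => G (4 * t) / (2 * t ^ 2), ?_, fun t ht => ?_⟩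
  · refine ContDiffOn.div (GC.comp (by fun_prop)).contDiffOn (by fun_prop) fun t ht => ?_
    have : (0 : ℝ) < t := ht
    positivity
  · have hs1 : s t = σ t := extZero_of_pos σ ht
    have hs4 : s (4 * t) = σ (4 * t) := extZero_of_pos σ (by positivity)
    have g1 := (primitive_sub_bounds Fc (show (2 * t) ≤ 4 * t by linarith) (Fm.monotoneOn _)).1
    have g2 := (primitive_sub_bounds Fc (show 0 ≤ 2 * t by linarith) (Fm.monotoneOn _)).1
    have g3 := (primitive_sub_bounds Fc (show 0 ≤ 4 * t by linarith) (Fm.monotoneOn _)).2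
    have f1 := (primitive_sub_bounds sc (show t ≤ 2 * t by linarith) (sm.monotoneOn _)).1
    have f3 := (primitive_sub_bounds sc (show 0 ≤ 4 * t by linarith) (sm.monotoneOn _)).2
    rw [← hG] at g1 g2 g3
    rw [← hF] at f1 f3
    rw [G0] at g2 g3
    rw [F0] at g2 f3
    rw [hs1] at f1
    rw [hs4] at f3
    have ft := Fn t ht.le
    have hlow : t * σ t ≤ F (2 * t) := by linarith
    have hup : F (4 * t) ≤ 4 * t * σ (4 * t) := by linarith
    constructor
    · rw [le_div_iff₀ (by positivity)]
      have := mul_le_mul_of_nonneg_left hlow (show 0 ≤ 2 * t by linarith)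
      nlinarith
    · rw [div_le_iff₀ (by positivity)]
      have := mul_le_mul_of_nonneg_left hup (show 0 ≤ 4 * t by linarith)
      nlinarith

end
end

section
/- Let Ω ⊆ ℝⁿ be open, and let u and u_m (m ∈ ℕ) be continuous real functions on Ω such that u_m → u locally uniformly on Ω. If x ∈ Ω and (p,X) ∈ J²⁺u(x), then there exist points x_m ∈ Ω and pairs (p_m, X_m) ∈ J²⁺u_m(x_m) such that (x_m, p_m, X_m) → (x, p, X) as m → ∞. -/
/-!
Perturbing `X` to `X + t I` with `t > 0` turns the super-jet inequality for `u` into a strict one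
on a small sphere around `x`: there `u - φ` lies strictly below its value at `x`, where
`φ(z) = p·z + ½⟨(X + t I)z, z⟩`. Uniform convergence on the closed ball transfers this strict
inequality to `um m` for large `m`, so the maximum of `um m - φ` over the closed ball is attained
at an interior point `y`, and expanding `φ` around `y` gives a super-jet of `um m` at `y` with
gradient `p + (X + t I)(y - x)` and Hessian `X + t I` (`exists_J2plus_of_sphere`). Hence jets of
`um m` come arbitrarily close to `(x, p, X)` eventually (`eventually_exists_J2plus_near`). The same
lemma with a huge `t` shows that every `um m` has some jet of this form (`exists_J2plus`), so a
sequence can be selected by almost minimizing the distance to `(x, p, 0)` over the triples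
`(y, q, t)` for which `(q, X + t I)` is a super-jet of `um m` at `y`.
-/

open scoped RealInnerProductSpace
open Filter

noncomputable section

lemma quadForm_add_smul_one {n : ℕ} (X : Matrix (Fin n) (Fin n) ℝ) (t : ℝ)
    (z : EuclideanSpace ℝ (Fin n)) :
    quadForm (X + t • 1) z = quadForm X z + t * ‖z‖ ^ 2 := by
  have h1 : Matrix.toEuclideanLin (1 : Matrix (Fin n) (Fin n) ℝ) z = z := by
    ext i
    simp
  unfold quadForm
  rw [map_add, map_smul, LinearMap.add_apply, LinearMap.smul_apply, h1, inner_add_left,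
    real_inner_smul_left, real_inner_self_eq_norm_sq]

lemma inner_toEuclideanLin_comm {n : ℕ} {Y : Matrix (Fin n) (Fin n) ℝ} (hY : Y.IsSymm)
    (w z : EuclideanSpace ℝ (Fin n)) :
    ⟪Matrix.toEuclideanLin Y z, w⟫ = ⟪Matrix.toEuclideanLin Y w, z⟫ := by
  have hH : Y.IsHermitian := by
    rw [Matrix.IsHermitian, Matrix.conjTranspose_eq_transpose_of_trivial]
    exact hY
  rw [(Matrix.isSymmetric_toEuclideanLin_iff.mpr hH) z w, real_inner_comm]

lemma quadForm_add {n : ℕ} {Y : Matrix (Fin n) (Fin n) ℝ} (hY : Y.IsSymm)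
    (w z : EuclideanSpace ℝ (Fin n)) :
    quadForm Y (w + z) = quadForm Y w + 2 * ⟪Matrix.toEuclideanLin Y w, z⟫ + quadForm Y z := by
  unfold quadForm
  rw [map_add, inner_add_left, inner_add_right, inner_add_right, inner_toEuclideanLin_comm hY w z]
  ring

lemma continuous_quadForm {n : ℕ} (Y : Matrix (Fin n) (Fin n) ℝ) : Continuous (quadForm Y) := by
  have h := (Matrix.toEuclideanLin Y).continuous_of_finiteDimensional
  exact h.inner continuous_id

/-- If `v` minus a quadratic polynomial is strictly smaller on a sphere around `x` than at `x`,
its maximum over the closed ball is interior and yields a super-jet of `v` there. -/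
lemma exists_J2plus_of_sphere {n : ℕ} {Ω : Set (EuclideanSpace ℝ (Fin n))}
    {v : EuclideanSpace ℝ (Fin n) → ℝ} (hv : ContinuousOn v Ω)
    {x : EuclideanSpace ℝ (Fin n)} {r : ℝ} (hr : 0 < r) (hball : Metric.closedBall x r ⊆ Ω)
    (p : EuclideanSpace ℝ (Fin n)) {Y : Matrix (Fin n) (Fin n) ℝ} (hY : Y.IsSymm)
    (hsph : ∀ z : EuclideanSpace ℝ (Fin n), ‖z‖ = r →
      v (x + z) < v x + ⟪p, z⟫ + (1 / 2) * quadForm Y z) :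
    ∃ y ∈ Metric.ball x r, J2plus Ω v y (p + Matrix.toEuclideanLin Y (y - x)) Y := by
  have hcont : ContinuousOn (fun y => v y - (⟪p, y - x⟫ + (1 / 2) * quadForm Y (y - x)))
      (Metric.closedBall x r) := by
    have hq := continuous_quadForm Y
    have : Continuous (fun y => ⟪p, y - x⟫ + (1 / 2) * quadForm Y (y - x)) := by fun_prop
    exact (hv.mono hball).sub this.continuousOn
  obtain ⟨y, hy, hmax⟩ := (isCompact_closedBall x r).exists_isMaxOn
    ⟨x, Metric.mem_closedBall_self hr.le⟩ hcont
  have hmax' : ∀ z ∈ Metric.closedBall x r,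
      v z - (⟪p, z - x⟫ + (1 / 2) * quadForm Y (z - x)) ≤
        v y - (⟪p, y - x⟫ + (1 / 2) * quadForm Y (y - x)) := fun z hz => hmax hz
  have hlt : ‖y - x‖ < r := by
    rw [mem_closedBall_iff_norm] at hy
    refine lt_of_le_of_ne hy fun heq => ?_
    have h1 := hsph (y - x) heq
    have h2 := hmax' x (Metric.mem_closedBall_self hr.le)
    have h0 : quadForm Y 0 = 0 := by simp [quadForm]
    rw [sub_self, inner_zero_right, h0] at h2
    rw [add_sub_cancel] at h1
    linarith
  refine ⟨y, mem_ball_iff_norm.mpr hlt, hY, fun ε hε => ⟨r - ‖y - x‖, by linarith, ?_⟩⟩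
  intro z hz _
  have hmem : y + z ∈ Metric.closedBall x r := by
    rw [mem_closedBall_iff_norm, add_sub_right_comm]
    exact (norm_add_le _ _).trans (by linarith)
  have h := hmax' _ hmem
  rw [add_sub_right_comm, quadForm_add hY, inner_add_right] at h
  rw [inner_add_left]
  have : 0 ≤ ε * ‖z‖ ^ 2 := by positivity
  linarith

lemma isSymm_add_smul_one {n : ℕ} {X : Matrix (Fin n) (Fin n) ℝ} (hX : X.IsSymm) (t : ℝ) :
    (X + t • (1 : Matrix (Fin n) (Fin n) ℝ)).IsSymm :=
  hX.add (Matrix.isSymm_one.smul t)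

/-- A continuous function on an open set has a super-jet with Hessian `X + t I` for some `t`:
a steep enough paraboloid touches it from above. -/
lemma exists_J2plus {n : ℕ} {Ω : Set (EuclideanSpace ℝ (Fin n))} (hΩ : IsOpen Ω)
    {v : EuclideanSpace ℝ (Fin n) → ℝ} (hv : ContinuousOn v Ω)
    {x : EuclideanSpace ℝ (Fin n)} (hx : x ∈ Ω)
    {X : Matrix (Fin n) (Fin n) ℝ} (hX : X.IsSymm) :
    ∃ a : EuclideanSpace ℝ (Fin n) × EuclideanSpace ℝ (Fin n) × ℝ,
      a.1 ∈ Ω ∧ J2plus Ω v a.1 a.2.1 (X + a.2.2 • 1) := by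
  obtain ⟨r, hr, hball⟩ := Metric.nhds_basis_closedBall.mem_iff.mp (hΩ.mem_nhds hx)
  have hcont : ContinuousOn (fun y => v y - (1 / 2) * quadForm X (y - x))
      (Metric.closedBall x r) := by
    have hq := continuous_quadForm X
    have : Continuous (fun y => (1 / 2) * quadForm X (y - x)) := by fun_prop
    exact (hv.mono hball).sub this.continuousOn
  obtain ⟨C, hC⟩ := (isCompact_closedBall x r).bddAbove_image hcont
  -- `t` is chosen so that `½ t r² = C - v x + 1`.
  obtain ⟨y, hy, hj⟩ := exists_J2plus_of_sphere hv hr hball 0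
    (isSymm_add_smul_one hX (2 * (C - v x + 1) / r ^ 2)) (by
      intro z hz
      have hmem : x + z ∈ Metric.closedBall x r := by
        rw [mem_closedBall_iff_norm, add_sub_cancel_left, hz]
      have h := hC (Set.mem_image_of_mem _ hmem)
      simp only [add_sub_cancel_left] at h
      rw [quadForm_add_smul_one, inner_zero_left, hz, div_mul_cancel₀ _ (by positivity)]
      linarith)
  exact ⟨(y, _, _), hball (Metric.ball_subset_closedBall hy), hj⟩

lemma eventually_exists_J2plus_near {n : ℕ} {Ω : Set (EuclideanSpace ℝ (Fin n))} (hΩ : IsOpen Ω)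
    {u : EuclideanSpace ℝ (Fin n) → ℝ} {um : ℕ → EuclideanSpace ℝ (Fin n) → ℝ}
    (hum : ∀ m, ContinuousOn (um m) Ω) (hconv : TendstoLocallyUniformlyOn um u atTop Ω)
    {x : EuclideanSpace ℝ (Fin n)} (hx : x ∈ Ω)
    {p : EuclideanSpace ℝ (Fin n)} {X : Matrix (Fin n) (Fin n) ℝ} (hjet : J2plus Ω u x p X)
    {η : ℝ} (hη : 0 < η) :
    ∀ᶠ m in atTop, ∃ a : EuclideanSpace ℝ (Fin n) × EuclideanSpace ℝ (Fin n) × ℝ,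
      (a.1 ∈ Ω ∧ J2plus Ω (um m) a.1 a.2.1 (X + a.2.2 • 1)) ∧ dist (x, p, (0 : ℝ)) a < η := by
  obtain ⟨hX, hjet⟩ := hjet
  obtain ⟨r₁, hr₁, hball⟩ := Metric.nhds_basis_closedBall.mem_iff.mp (hΩ.mem_nhds hx)
  obtain ⟨δ, hδ, hu⟩ := hjet (η / 8) (by positivity)
  set A := Matrix.toEuclideanLin (X + (η / 2) • (1 : Matrix (Fin n) (Fin n) ℝ)) with hA
  obtain ⟨s, hs, hAs⟩ := Metric.continuousAt_iff.mp
    (A.continuous_of_finiteDimensional.continuousAt (x := 0)) η hη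
  obtain ⟨r, hr, hrlt⟩ := exists_between (show (0 : ℝ) < min (min r₁ δ) (min s η) by
    simp [hr₁, hδ, hs, hη])
  obtain ⟨⟨hr1, hrδ⟩, hrs, hrη⟩ := by simpa only [lt_min_iff] using hrlt
  have hballr : Metric.closedBall x r ⊆ Ω := (Metric.closedBall_subset_closedBall hr1.le).trans hball
  have hunif := (tendstoLocallyUniformlyOn_iff_forall_isCompact hΩ).mp hconv _ hballr
    (isCompact_closedBall x r)
  -- On the sphere `u - φ` lies below `u x` by `η r² / 8`, more than twice the tolerance here.
  filter_upwards [Metric.tendstoUniformlyOn_iff.mp hunif (η * r ^ 2 / 24) (by positivity)]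
    with m hm
  obtain ⟨y, hy, hj⟩ := exists_J2plus_of_sphere (hum m) hr hballr p
    (isSymm_add_smul_one hX (η / 2)) (by
      intro z hz
      have hmem : x + z ∈ Metric.closedBall x r := by
        rw [mem_closedBall_iff_norm, add_sub_cancel_left, hz]
      have h1 := hm _ hmem
      have h2 := hm _ (Metric.mem_closedBall_self hr.le)
      have h3 := hu z (by linarith) (hballr hmem)
      rw [Real.dist_eq, abs_lt] at h1 h2
      rw [quadForm_add_smul_one, hz]
      rw [hz] at h3
      have : 0 < η * r ^ 2 := by positivity
      linarith [h1.1, h2.2])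
  refine ⟨(y, p + A (y - x), η / 2), ⟨hballr (Metric.ball_subset_closedBall hy), hj⟩, ?_⟩
  rw [Metric.mem_ball] at hy
  have hAy : ‖A (y - x)‖ < η := by
    have := hAs (x := y - x) (by rw [dist_zero_right, ← dist_eq_norm]; linarith)
    rwa [map_zero, dist_zero_right] at this
  simp only [Prod.dist_eq, max_lt_iff]
  refine ⟨by rw [dist_comm]; linarith, by rwa [dist_self_add_right], ?_⟩
  rw [Real.dist_eq, zero_sub, abs_neg, abs_of_pos (by positivity)]
  linarith

/-- stability of jets under locally uniform convergence: if continuous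
functions `u_m → u` locally uniformly on an open set `Ω` and `(p,X) ∈ J²⁺u(x)` for
`x ∈ Ω`, then there are `x_m ∈ Ω` and `(p_m,X_m) ∈ J²⁺u_m(x_m)` with
`(x_m,p_m,X_m) → (x,p,X)`. -/
theorem stmt_7 {n : ℕ} (Ω : Set (EuclideanSpace ℝ (Fin n))) (hΩ : IsOpen Ω)
    (u : EuclideanSpace ℝ (Fin n) → ℝ) (um : ℕ → EuclideanSpace ℝ (Fin n) → ℝ)
    (hu : ContinuousOn u Ω) (hum : ∀ m, ContinuousOn (um m) Ω)
    (hconv : TendstoLocallyUniformlyOn um u atTop Ω)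
    (x : EuclideanSpace ℝ (Fin n)) (hx : x ∈ Ω)
    (p : EuclideanSpace ℝ (Fin n)) (X : Matrix (Fin n) (Fin n) ℝ)
    (hjet : J2plus Ω u x p X) :
    ∃ (xm : ℕ → EuclideanSpace ℝ (Fin n)) (pm : ℕ → EuclideanSpace ℝ (Fin n))
      (Xm : ℕ → Matrix (Fin n) (Fin n) ℝ),
      (∀ m, xm m ∈ Ω ∧ J2plus Ω (um m) (xm m) (pm m) (Xm m)) ∧
      Tendsto xm atTop (nhds x) ∧ Tendsto pm atTop (nhds p) ∧
      Tendsto Xm atTop (nhds X) := by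
  let S : ℕ → Set (EuclideanSpace ℝ (Fin n) × EuclideanSpace ℝ (Fin n) × ℝ) := fun m =>
    {a | a.1 ∈ Ω ∧ J2plus Ω (um m) a.1 a.2.1 (X + a.2.2 • 1)}
  have hne : ∀ m, (S m).Nonempty := fun m => exists_J2plus hΩ (hum m) hx hjet.1
  have hinf : Tendsto (fun m => Metric.infDist (x, p, (0 : ℝ)) (S m)) atTop (nhds 0) := by
    rw [Metric.tendsto_nhds]
    intro η hη
    filter_upwards [eventually_exists_J2plus_near hΩ hum hconv hx hjet hη] with m hm
    obtain ⟨a, ha, hda⟩ := hm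
    rw [Real.dist_eq, sub_zero, abs_of_nonneg Metric.infDist_nonneg]
    exact (Metric.infDist_le_dist_of_mem (show a ∈ S m from ha)).trans_lt hda
  have hsel : ∀ m : ℕ, ∃ a ∈ S m,
      dist (x, p, (0 : ℝ)) a < Metric.infDist (x, p, (0 : ℝ)) (S m) + 1 / ((m : ℝ) + 1) :=
    fun m => (Metric.infDist_lt_iff (hne m)).mp
      (lt_add_of_pos_right _ (one_div_pos.mpr (Nat.cast_add_one_pos m)))
  choose a haS hda using hsel
  have hlim : Tendsto a atTop (nhds (x, p, (0 : ℝ))) := by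
    rw [tendsto_iff_dist_tendsto_zero]
    refine squeeze_zero (fun _ => dist_nonneg) (fun m => ?_)
      (by simpa only [add_zero] using hinf.add (tendsto_one_div_add_atTop_nhds_zero_nat (𝕜 := ℝ)))
    rw [dist_comm]
    exact (hda m).le
  have ht := (Prod.tendsto_iff _ _).mp hlim
  have ht2 := (Prod.tendsto_iff _ _).mp ht.2
  refine ⟨fun m => (a m).1, fun m => (a m).2.1, fun m => X + (a m).2.2 • 1, haS, ht.1, ht2.1, ?_⟩
  simpa using (tendsto_const_nhds (x := X)).add
    (ht2.2.smul_const (1 : Matrix (Fin n) (Fin n) ℝ))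

end
end

section
/- ('Magic property' of sup-convolutions.) Let Ω ⊆ ℝⁿ be bounded open, u : Ω̄ → ℝ continuous, ε > 0, x ∈ Ω, and suppose (p,X) ∈ J²⁺u^ε(x), where u^ε is the sup-convolution of u. Then the point x^ε := x + εp lies in Ω̄, the supremum defining u^ε(x) is attained at x^ε, i.e. u^ε(x) = u(x^ε) − ε|p|²/2, and (p,X) is a super-jet of u relative to Ω̄ at x^ε: u(y) ≤ u(x^ε) + p·(y − x^ε) + ½⟨X(y − x^ε), y − x^ε⟩ + o(|y − x^ε|²) as y → x^ε with y ∈ Ω̄. -/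
/-! For `y ∈ closure Ω` the function `w ↦ u y - ‖w - y‖² / (2ε)` lies below `supConv Ω u ε`
everywhere (`le_supConv`), and by compactness it touches it at `w = x` for some `y = y₀`
(`exists_supConv_eq`). A smooth function touching from below at an interior point must have
gradient equal to the first-order part of any super-jet there, so `-(x - y₀)/ε = p`, that is
`y₀ = x + ε p`. For the second-order part, translate `x` and `y₀` by the same vector `z`: the
penalty `‖(x + z) - (y₀ + z)‖² / (2ε)` does not change, hence
`u (y₀ + z) - u y₀ ≤ supConv Ω u ε (x + z) - supConv Ω u ε x`, and the super-jet inequality passes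
from `supConv Ω u ε` at `x` to `u` at `y₀`. -/

open scoped RealInnerProductSpace
open Filter

noncomputable section

/-- The sup-convolution `u^ε(x) = sup_{y ∈ Ω} (u(y) − |x−y|²/(2ε))`. -/
def supConv {n : ℕ} (Ω : Set (EuclideanSpace ℝ (Fin n))) (u : EuclideanSpace ℝ (Fin n) → ℝ)
    (ε : ℝ) (x : EuclideanSpace ℝ (Fin n)) : ℝ :=
  sSup ((fun y => u y - ‖x - y‖ ^ 2 / (2 * ε)) '' Ω)

lemma continuousOn_penalized {n : ℕ} {S : Set (EuclideanSpace ℝ (Fin n))}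
    {u : EuclideanSpace ℝ (Fin n) → ℝ} (hu : ContinuousOn u S) (ε : ℝ)
    (x : EuclideanSpace ℝ (Fin n)) :
    ContinuousOn (fun y => u y - ‖x - y‖ ^ 2 / (2 * ε)) S :=
  hu.sub (by fun_prop)

/-- The points of `Ω` suffice to bound the supremum over `closure Ω`, by continuity of `u`. -/
lemma le_supConv {n : ℕ} {Ω : Set (EuclideanSpace ℝ (Fin n))} (hΩb : Bornology.IsBounded Ω)
    {u : EuclideanSpace ℝ (Fin n) → ℝ} (hu : ContinuousOn u (closure Ω)) (ε : ℝ)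
    (x : EuclideanSpace ℝ (Fin n)) {y : EuclideanSpace ℝ (Fin n)} (hy : y ∈ closure Ω) :
    u y - ‖x - y‖ ^ 2 / (2 * ε) ≤ supConv Ω u ε x := by
  have hc := continuousOn_penalized hu ε x
  have hbdd : BddAbove ((fun y => u y - ‖x - y‖ ^ 2 / (2 * ε)) '' Ω) :=
    (hΩb.isCompact_closure.bddAbove_image hc).mono (Set.image_mono subset_closure)
  exact le_on_closure (f := fun y => u y - ‖x - y‖ ^ 2 / (2 * ε)) (g := fun _ => supConv Ω u ε x)
    (fun z hz => le_csSup hbdd ⟨z, hz, rfl⟩) hc continuousOn_const hy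

lemma exists_supConv_eq {n : ℕ} {Ω : Set (EuclideanSpace ℝ (Fin n))}
    (hΩb : Bornology.IsBounded Ω) (hΩne : Ω.Nonempty)
    {u : EuclideanSpace ℝ (Fin n) → ℝ} (hu : ContinuousOn u (closure Ω)) (ε : ℝ)
    (x : EuclideanSpace ℝ (Fin n)) :
    ∃ y ∈ closure Ω, supConv Ω u ε x = u y - ‖x - y‖ ^ 2 / (2 * ε) := by
  obtain ⟨y, hy, hmax⟩ := hΩb.isCompact_closure.exists_isMaxOn hΩne.closure
    (continuousOn_penalized hu ε x)
  refine ⟨y, hy, le_antisymm (csSup_le (hΩne.image _) ?_) (le_supConv hΩb hu ε x hy)⟩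
  rintro _ ⟨z, hz, rfl⟩
  exact hmax (subset_closure hz)

lemma quadForm_smul {n : ℕ} (X : Matrix (Fin n) (Fin n) ℝ) (t : ℝ)
    (z : EuclideanSpace ℝ (Fin n)) : quadForm X (t • z) = t ^ 2 * quadForm X z := by
  simp only [quadForm, map_smul, real_inner_smul_left, real_inner_smul_right]
  ring

/-- A linear form bounded below near `0` by a quadratic one vanishes. -/
lemma eq_zero_of_inner_add_quadForm_nonneg {n : ℕ} {q : EuclideanSpace ℝ (Fin n)}
    {X : Matrix (Fin n) (Fin n) ℝ} {C : ℝ}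
    (h : ∀ᶠ z in nhds (0 : EuclideanSpace ℝ (Fin n)),
      0 ≤ ⟪q, z⟫ + (1 / 2) * quadForm X z + C * ‖z‖ ^ 2) : q = 0 := by
  -- Test with `z = -t q` for small `t > 0`, and divide by `t`.
  have ht : Tendsto (fun t : ℝ => (-t) • q) (nhdsWithin 0 (Set.Ioi 0)) (nhds 0) := by
    have : Continuous (fun t : ℝ => (-t) • q) := by fun_prop
    simpa using (this.tendsto 0).mono_left nhdsWithin_le_nhds
  have hlin : Tendsto (fun t : ℝ => t * ((1 / 2) * quadForm X q + C * ‖q‖ ^ 2))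
      (nhdsWithin 0 (Set.Ioi 0)) (nhds 0) := by
    have : Continuous (fun t : ℝ => t * ((1 / 2) * quadForm X q + C * ‖q‖ ^ 2)) := by fun_prop
    simpa using (this.tendsto 0).mono_left nhdsWithin_le_nhds
  have hle : ‖q‖ ^ 2 ≤ 0 := by
    refine ge_of_tendsto hlin ?_
    filter_upwards [ht.eventually h, self_mem_nhdsWithin] with t h1 (h2 : 0 < t)
    rw [quadForm_smul, real_inner_smul_right, real_inner_self_eq_norm_sq, norm_smul,
      mul_pow, Real.norm_eq_abs, sq_abs] at h1
    refine le_of_mul_le_mul_left ?_ h2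
    linarith
  simpa using le_antisymm hle (sq_nonneg _)

/-- "magic property" of sup-convolutions: if `(p,X) ∈ J²⁺u^ε(x)` for
`x ∈ Ω`, then `x^ε := x + εp ∈ Ω̄`, the supremum defining `u^ε(x)` is attained at `x^ε`,
i.e. `u^ε(x) = u(x^ε) − ε|p|²/2`, and `(p,X)` is a super-jet of `u` relative to `Ω̄`
at `x^ε`. -/
theorem stmt_13 {n : ℕ} (Ω : Set (EuclideanSpace ℝ (Fin n)))
    (hΩo : IsOpen Ω) (hΩb : Bornology.IsBounded Ω) (hΩne : Ω.Nonempty)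
    (u : EuclideanSpace ℝ (Fin n) → ℝ) (hu : ContinuousOn u (closure Ω))
    (ε : ℝ) (hε : 0 < ε)
    (x : EuclideanSpace ℝ (Fin n)) (hx : x ∈ Ω)
    (p : EuclideanSpace ℝ (Fin n)) (X : Matrix (Fin n) (Fin n) ℝ)
    (hjet : J2plus Ω (supConv Ω u ε) x p X) :
    x + ε • p ∈ closure Ω ∧
    supConv Ω u ε x = u (x + ε • p) - ε * ‖p‖ ^ 2 / 2 ∧
    J2plus (closure Ω) u (x + ε • p) p X := by
  obtain ⟨hX, hjet⟩ := hjet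
  obtain ⟨y, hy, hmax⟩ := exists_supConv_eq hΩb hΩne hu ε x
  have hxΩ : ∀ᶠ z in nhds (0 : EuclideanSpace ℝ (Fin n)), x + z ∈ Ω := by
    have : Continuous (fun z => x + z) := by fun_prop
    exact this.continuousAt.eventually_mem (hΩo.mem_nhds (by simpa using hx))
  have hq : p + ε⁻¹ • (x - y) = 0 := by
    obtain ⟨δ, hδ, hδ'⟩ := hjet 1 one_pos
    refine eq_zero_of_inner_add_quadForm_nonneg (X := X) (C := 1 + 1 / (2 * ε)) ?_
    filter_upwards [hxΩ, Metric.ball_mem_nhds 0 hδ] with z hz hzδ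
    have h1 := hδ' z (by simpa using hzδ) hz
    have h2 := le_supConv hΩb hu ε (x + z) hy
    have h3 : ‖x + z - y‖ ^ 2 / (2 * ε)
        = ‖x - y‖ ^ 2 / (2 * ε) + ε⁻¹ * ⟪x - y, z⟫ + 1 / (2 * ε) * ‖z‖ ^ 2 := by
      rw [show x + z - y = (x - y) + z by abel, norm_add_sq_real]
      field_simp
    rw [inner_add_left, real_inner_smul_left]
    linarith
  have hxy : x - y = -(ε • p) := by
    have h := congrArg (ε • ·) hq
    simp only [smul_add, smul_inv_smul₀ hε.ne', smul_zero] at h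
    exact eq_neg_of_add_eq_zero_right h
  obtain rfl : y = x + ε • p := by rw [← neg_eq_iff_eq_neg.mpr hxy]; abel
  refine ⟨hy, ?_, hX, fun η hη => ?_⟩
  · rw [hmax, hxy, norm_neg, norm_smul, mul_pow, Real.norm_eq_abs, sq_abs]
    field_simp
  · obtain ⟨δ₁, hδ₁, h₁⟩ := hjet η hη
    obtain ⟨δ₂, hδ₂, h₂⟩ := Metric.eventually_nhds_iff.mp hxΩ
    refine ⟨min δ₁ δ₂, lt_min hδ₁ hδ₂, fun z hz hzΩ => ?_⟩
    have h3 := h₁ z (hz.trans_le (min_le_left _ _))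
      (h₂ (by simpa using hz.trans_le (min_le_right _ _)))
    have h4 := le_supConv hΩb hu ε (x + z) hzΩ
    rw [add_sub_add_right_eq_sub] at h4
    linarith

end
end

section
/- (Comparison Principle.) Let F : ℝ × ℝⁿ × Sym(n) → ℝ be continuous, f : Ω̄ → ℝ continuous, and Ω ⊆ ℝⁿ bounded open. Assume that X ≤ Y implies F(r,p,X) ≤ F(r,p,Y), and that there is γ > 0 such that r ≤ s implies F(r,p,X) ≥ F(s,p,X) + γ(s − r). Suppose u ∈ C⁰(Ω̄) is a viscosity solution of F(u,Du,D²u) ≥ f on Ω and v ∈ C⁰(Ω̄) is a viscosity solution of F(v,Dv,D²v) ≤ f on Ω. Then u ≤ v on ∂Ω implies u ≤ v on Ω̄. -/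
open scoped RealInnerProductSpace
open Filter

noncomputable section

/-!
The proof is the doubling-of-variables argument for viscosity solutions, with an elementary
replacement for the theorem on sums that uses Rademacher's theorem but neither Alexandrov's theorem
nor Jensen's lemma.

Let `K` be the closure of `Ω`. For a slope `q` with `‖q‖ ≤ δ`, let `(y_q, y'_q)` maximise
`u y - v y' - (α / 4) ‖y - y'‖² - ⟪q, y + y'⟫ / 2` over `K × K`, with maximum `c q`. Completing a
square (`doubling_identity`), maximality says that, for all `x` and all `y, y' ∈ K`,
`u y - (α / 2) ‖x - y‖² ≤ v y' + (α / 2) ‖x - y'‖² + ⟪q, x⟫ + ‖q‖² / (4 α) + c q`,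
with equality at `(y_q, y'_q)` and `x = X q := (y_q + y'_q) / 2 - q / (2 α)`.
As functions of `x`, the left-hand sides are paraboloids of opening `-α` and the right-hand sides
are paraboloids of opening `α`, so a single function `h` of class `C^{1,1}`, not depending on `q`,
can be inserted between them (`exists_two_sided`). It is built by taking the infimum over `x` of
the right-hand side plus `(α / 2) ‖x - y‖²`, then the infimum over `(q, y')`, and finally a
sup-convolution in `y`.

The map `q ↦ X q` is expanding up to a factor, so it sends the ball `‖q‖ ≤ δ` to a set which is not
negligible, whereas the Lipschitz map `∇h` is differentiable almost everywhere. Hence `∇h` is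
differentiable at some `X q`, where `h` has a second-order expansion with slope `p` and Hessian `L`.
Since `h` touches both sides there, `(p, L)` is a superjet of `u` at `y_q` and `(p - q, L)` is a
subjet of `v` at `y'_q` (`exists_doubling_jets`).

If `u x₀ > v x₀` somewhere, a large `α` makes `y_q` and `y'_q` close to each other, hence both in
`Ω` by the boundary inequality. The two viscosity inequalities then contradict the monotonicity of
`F` in `r` once `δ` is small, because `p` and `L` are bounded in terms of `α` and `Ω`, and `F` is
uniformly continuous on compact sets.
-/

/-! ### Functions squeezed between paraboloids -/

section Smooth

variable {E : Type*} [NormedAddCommGroup E] [InnerProductSpace ℝ E]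

/-- A field `G` of vectors such that `h` is squeezed, at each point, between two paraboloids of
opening `2C` with slope `G` is Lipschitz. -/
lemma norm_sub_le_of_two_sided {h : E → ℝ} {G : E → E} {C : ℝ} (hC : 0 < C)
    (H : ∀ x w, |h w - h x - ⟪G x, w - x⟫| ≤ C * ‖w - x‖ ^ 2) (x y : E) :
    ‖G x - G y‖ ≤ 6 * C * ‖x - y‖ := by
  -- Compare the expansions at `x` and `y` at the point `y - θ (G x - G y)`, with `θ = 1 / (6 C)`.
  set D := G x - G y with hD
  set r := x - y with hr
  set θ : ℝ := (6 * C)⁻¹ with hθ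
  have hθC : θ * C = 1 / 6 := by rw [hθ]; field_simp
  have hθ0 : 0 < θ := by positivity
  have h1 := (abs_le.1 (H x (y - θ • D))).2
  have h1' := (abs_le.1 (H x (y - θ • D))).1
  have h2 := (abs_le.1 (H y (y - θ • D))).1
  have h3 := (abs_le.1 (H x y)).1
  have e1 : y - θ • D - x = -(r + θ • D) := by rw [hr]; abel
  have e2 : y - θ • D - y = -(θ • D) := by abel
  have e3 : y - x = - r := by rw [hr]; abel
  have hDD : ⟪G x, D⟫ - ⟪G y, D⟫ = ‖D‖ ^ 2 := by
    rw [← inner_sub_left, ← hD, real_inner_self_eq_norm_sq]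
  have par := parallelogram_law_with_norm ℝ r (θ • D)
  have nD : ‖θ • D‖ = θ * ‖D‖ := by rw [norm_smul, Real.norm_of_nonneg hθ0.le]
  rw [e1, inner_neg_right, inner_add_right, inner_smul_right, norm_neg] at h1 h1'
  rw [e2, inner_neg_right, inner_smul_right, norm_neg, nD] at h2
  rw [e3, inner_neg_right, norm_neg] at h3
  rw [nD] at par
  have key : θ * ‖D‖ ^ 2 ≤ C * (3 * ‖r‖ ^ 2 + 3 * (θ * ‖D‖) ^ 2) := by
    have : C * ‖r + θ • D‖ ^ 2 ≤ C * (2 * (‖r‖ ^ 2 + (θ * ‖D‖) ^ 2)) := by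
      gcongr
      nlinarith [sq_nonneg ‖r - θ • D‖]
    nlinarith
  have key2 : ‖D‖ ^ 2 ≤ (6 * C * ‖r‖) ^ 2 := by
    have e4 : C * (3 * (θ * ‖D‖) ^ 2) = θ * ‖D‖ ^ 2 / 2 := by
      linear_combination (3 * θ * ‖D‖ ^ 2) * hθC
    have e5 : θ * ‖D‖ ^ 2 ≤ C * 6 * ‖r‖ ^ 2 := by linarith
    have e6 : C * (θ * ‖D‖ ^ 2) = ‖D‖ ^ 2 / 6 := by linear_combination ‖D‖ ^ 2 * hθC
    nlinarith [mul_le_mul_of_nonneg_left e5 hC.le]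
  exact abs_le_of_sq_le_sq' key2 (by positivity) |>.2

lemma hasFDerivAt_of_two_sided {h : E → ℝ} {G : E → E} {C : ℝ}
    (H : ∀ x w, |h w - h x - ⟪G x, w - x⟫| ≤ C * ‖w - x‖ ^ 2) (x : E) :
    HasFDerivAt h (innerSL ℝ (G x)) x := by
  rw [hasFDerivAt_iff_isLittleO_nhds_zero]
  have h1 : (fun z : E => h (x + z) - h x - innerSL ℝ (G x) z) =O[nhds 0] fun z => ‖z‖ ^ 2 := by
    refine Asymptotics.IsBigO.of_bound C (Eventually.of_forall fun z => ?_)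
    have := H x (x + z)
    rw [add_sub_cancel_left] at this
    simpa using this
  exact h1.trans_isLittleO (Asymptotics.isLittleO_norm_pow_id one_lt_two)

/-- Where the gradient of a differentiable function is differentiable, the function has a
second-order Taylor expansion with symmetric Hessian. -/
lemma second_order_expansion {h : E → ℝ} {G : E → E}
    (hG : ∀ x, HasFDerivAt h (innerSL ℝ (G x)) x) {x : E} {L : E →L[ℝ] E}
    (hL : HasFDerivAt G L x) :
    (∀ a b, ⟪L a, b⟫ = ⟪a, L b⟫) ∧
    ∀ ε > 0, ∃ δ > 0, ∀ z : E, ‖z‖ < δ →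
      |h (x + z) - h x - ⟪G x, z⟫ - (1 / 2) * ⟪L z, z⟫| ≤ ε * ‖z‖ ^ 2 := by
  have symm : ∀ a b, ⟪L a, b⟫ = ⟪a, L b⟫ := by
    intro a b
    have := second_derivative_symmetric (𝕜 := ℝ) hG
      ((innerSL ℝ (E := E)).hasFDerivAt.comp x hL) a b
    change ⟪L a, b⟫ = ⟪L b, a⟫ at this
    rw [this, real_inner_comm]
  refine ⟨symm, fun ε hε => ?_⟩
  rw [hasFDerivAt_iff_isLittleO_nhds_zero, Asymptotics.isLittleO_iff] at hL
  obtain ⟨δ, hδ, hδ'⟩ := Metric.eventually_nhds_iff_ball.1 (hL hε)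
  refine ⟨δ, hδ, fun z hz => ?_⟩
  let ψ : E → ℝ := fun z => h (x + z) - ⟪G x, z⟫ - (1 / 2) * ⟪L z, z⟫
  have hψ : ∀ z, HasFDerivAt ψ (innerSL ℝ (G (x + z) - G x - L z)) z := by
    intro z
    have d1 : HasFDerivAt (fun z => h (x + z)) (innerSL ℝ (G (x + z))) z := by
      exact (hG (x + z)).comp z ((hasFDerivAt_id z).const_add x)
    have d2 : HasFDerivAt (fun z => ⟪G x, z⟫) (innerSL ℝ (G x)) z :=
      (innerSL ℝ (G x)).hasFDerivAt
    have d3 := ((L.hasFDerivAt (x := z)).inner ℝ (hasFDerivAt_id z)).const_mul (1 / 2 : ℝ)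
    refine ((d1.sub d2).sub d3).congr_fderiv ?_
    ext w
    have := symm z w
    simp only [real_inner_comm] at this ⊢
    simp
    have := symm w z
    have := real_inner_comm (L z) w
    linarith
  have := (convex_closedBall (0 : E) ‖z‖).norm_image_sub_le_of_norm_hasFDerivWithin_le
    (f := ψ) (C := ε * ‖z‖) (x := 0) (y := z)
    (fun y _ => (hψ y).hasFDerivWithinAt) (fun y hy => ?_) (by simp) (by simp)
  · simp only [ψ, Real.norm_eq_abs, sub_zero] at this
    simp only [add_zero, inner_zero_right, mul_zero, sub_zero] at this
    rw [pow_two, ← mul_assoc]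
    refine le_of_eq_of_le ?_ this
    congr 1
    ring
  · rw [mem_closedBall_zero_iff] at hy
    rw [innerSL_apply_norm]
    exact (hδ' y (by simpa using hy.trans_lt hz)).trans (by gcongr)

end Smooth

/-! ### Insertion of a `C^{1,1}` function -/

section Insertion

variable {E : Type*} [NormedAddCommGroup E] [InnerProductSpace ℝ E]

/-- If a concave function minus the paraboloid `(α / 4) ‖y - e‖²` is maximal over `B` at `y₀`, then
the concave function lies below its tangent there. -/
lemma concave_variational {B : Set E} {κ : E → ℝ} (hκ : ConcaveOn ℝ B κ) {α : ℝ} {e y₀ y : E}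
    (hy₀ : y₀ ∈ B) (hy : y ∈ B)
    (hmax : ∀ w ∈ B, κ w - α / 4 * ‖w - e‖ ^ 2 ≤ κ y₀ - α / 4 * ‖y₀ - e‖ ^ 2) :
    κ y ≤ κ y₀ + α / 2 * ⟪y₀ - e, y - y₀⟫ := by
  set d := y - y₀ with hd
  set c := y₀ - e with hc
  -- Compare with `y₀ + t d` and divide by `t`.
  have key : ∀ t : ℝ, 0 < t → t ≤ 1 →
      κ y - κ y₀ - α / 2 * ⟪c, d⟫ ≤ t * (α / 4 * ‖d‖ ^ 2) := by
    intro t ht ht1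
    have hw : (1 - t) • y₀ + t • y = y₀ + t • d := by rw [hd]; module
    have h1 := hκ.2 hy₀ hy (sub_nonneg.2 ht1) ht.le (by ring)
    have h2 := hmax _ (hκ.1 hy₀ hy (sub_nonneg.2 ht1) ht.le (by ring))
    rw [hw] at h1 h2
    have h3 : y₀ + t • d - e = c + t • d := by rw [hc]; abel
    rw [h3, norm_add_sq_real, inner_smul_right, norm_smul, Real.norm_of_nonneg ht.le] at h2
    simp only [smul_eq_mul] at h1
    refine le_of_mul_le_mul_left ?_ ht
    nlinarith
  by_contra hcon
  push Not at hcon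
  set A := κ y - κ y₀ - α / 2 * ⟪c, d⟫ with hA
  have hA0 : 0 < A := by rw [hA]; linarith
  have hlim : Tendsto (fun t : ℝ => t * (α / 4 * ‖d‖ ^ 2)) (nhdsWithin 0 (Set.Ioi 0)) (nhds 0) := by
    have : Tendsto (fun t : ℝ => t * (α / 4 * ‖d‖ ^ 2)) (nhds 0) (nhds (0 * (α / 4 * ‖d‖ ^ 2))) :=
      (continuous_id.mul continuous_const).tendsto 0
    rw [zero_mul] at this
    exact this.mono_left nhdsWithin_le_nhds
  have : A ≤ 0 := by
    refine ge_of_tendsto hlim ?_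
    filter_upwards [Ioc_mem_nhdsGT (zero_lt_one (α := ℝ))] with t ht
    exact key t ht.1 ht.2
  linarith

/-- The sup-convolution `h` of `κ + (α / 4) ‖·‖²`, with `κ` concave on a compact set `B`, is of
class `C^{1,1}`: at each `x` it lies between two paraboloids of opening `α` with slope
`α (Y x - x)`, where `Y x` is a point at which the supremum is attained. -/
lemma exists_two_sided {B : Set E} (hB : IsCompact B) (hne : B.Nonempty) {κ : E → ℝ}
    (hκ : ConcaveOn ℝ B κ) (husc : UpperSemicontinuousOn κ B) {α : ℝ} (hα : 0 < α) :
    ∃ (h : E → ℝ) (Y : E → E), (∀ x, Y x ∈ B) ∧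
      (∀ x, ∀ y ∈ B, κ y + α / 4 * ‖y‖ ^ 2 - α / 2 * ‖x - y‖ ^ 2 ≤ h x) ∧
      (∀ x, h x = κ (Y x) + α / 4 * ‖Y x‖ ^ 2 - α / 2 * ‖x - Y x‖ ^ 2) ∧
      ∀ x w, |h w - h x - ⟪α • (Y x - x), w - x⟫| ≤ α / 2 * ‖w - x‖ ^ 2 := by
  -- Completing the square makes the quantity to be maximised jointly concave in `(x, y)`.
  have sq : ∀ x y : E, α / 4 * ‖y‖ ^ 2 - α / 2 * ‖x - y‖ ^ 2
      = α / 2 * ‖x‖ ^ 2 - α / 4 * ‖y - (2 : ℝ) • x‖ ^ 2 := by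
    intro x y
    rw [norm_sub_sq_real, norm_sub_sq_real, inner_smul_right, norm_smul, real_inner_comm x y]
    norm_num
    ring
  have hex : ∀ x, ∃ y ∈ B, ∀ w ∈ B,
      κ w - α / 4 * ‖w - (2 : ℝ) • x‖ ^ 2 ≤ κ y - α / 4 * ‖y - (2 : ℝ) • x‖ ^ 2 := by
    intro x
    have hu : UpperSemicontinuousOn (fun w => κ w + -(α / 4 * ‖w - (2 : ℝ) • x‖ ^ 2)) B :=
      husc.add (Continuous.continuousOn (by fun_prop)).upperSemicontinuousOn
    obtain ⟨y, hy, hm⟩ := hu.exists_isMaxOn hne hB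
    exact ⟨y, hy, fun w hw => by simpa [sub_eq_add_neg] using hm hw⟩
  choose Y hYB hY using hex
  let h : E → ℝ := fun x => κ (Y x) + α / 4 * ‖Y x‖ ^ 2 - α / 2 * ‖x - Y x‖ ^ 2
  have hle : ∀ x, ∀ y ∈ B, κ y + α / 4 * ‖y‖ ^ 2 - α / 2 * ‖x - y‖ ^ 2 ≤ h x := by
    intro x y hy
    have := hY x y hy
    have e1 := sq x y
    have e2 := sq x (Y x)
    simp only [h]
    linarith
  refine ⟨h, Y, hYB, hle, fun _ => rfl, fun x w => ?_⟩
  rw [abs_le]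
  obtain ⟨z, rfl⟩ : ∃ z, w = x + z := ⟨w - x, by abel⟩
  rw [add_sub_cancel_left, inner_smul_left]
  simp only [conj_trivial]
  constructor
  · have h1 := hle (x + z) (Y x) (hYB x)
    have e : x + z - Y x = z - (Y x - x) := by abel
    have e' : x - Y x = - (Y x - x) := by abel
    rw [e, norm_sub_sq_real, real_inner_comm] at h1
    simp only [h] at h1 ⊢
    rw [e', norm_neg]
    linarith
  · have h1 := concave_variational hκ (hYB x) (hYB (x + z)) (hY x)
    set y := Y x with hy
    set y' := Y (x + z) with hy'
    have e1 := sq x y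
    have e2 := sq (x + z) y'
    have e3 : y' - (2 : ℝ) • (x + z) = (y - (2 : ℝ) • x) + ((y' - y) - (2 : ℝ) • z) := by module
    have e4 : y - x = (y - (2 : ℝ) • x) + x := by module
    rw [e3, norm_add_sq_real x z, norm_add_sq_real (y - (2 : ℝ) • x), inner_sub_right,
      inner_smul_right] at e2
    have e5 : ⟪y - x, z⟫ = ⟪y - (2 : ℝ) • x, z⟫ + ⟪x, z⟫ := by
      conv_lhs => rw [e4]
      rw [inner_add_left]
    have e6 := mul_nonneg (by positivity : 0 ≤ α / 4) (sq_nonneg ‖(y' - y) - (2 : ℝ) • z‖)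
    simp only [h]
    rw [e5]
    nlinarith

/-- An infimum of affine functions is concave and upper semicontinuous. -/
lemma concave_usc_ciInf {ι : Type*} [Nonempty ι] {B : Set E} (hB : Convex ℝ B) (a : ι → ℝ)
    (b : ι → E) (m : ℝ) (hm : ∀ i, ∀ y ∈ B, m ≤ a i + ⟪b i, y⟫) :
    ConcaveOn ℝ B (fun y => ⨅ i, (a i + ⟪b i, y⟫)) ∧
      UpperSemicontinuousOn (fun y => ⨅ i, (a i + ⟪b i, y⟫)) B := by
  have hbdd : ∀ y ∈ B, BddBelow (Set.range fun i => a i + ⟪b i, y⟫) := by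
    rintro y hy
    exact ⟨m, by rintro _ ⟨i, rfl⟩; exact hm i y hy⟩
  constructor
  · refine ⟨hB, fun y hy y' hy' s t hs ht hst => le_ciInf fun i => ?_⟩
    have h1 := ciInf_le (hbdd y hy) i
    have h2 := ciInf_le (hbdd y' hy') i
    rw [inner_add_right, inner_smul_right, inner_smul_right]
    simp only [smul_eq_mul]
    have : a i = s * a i + t * a i := by rw [← add_mul, hst, one_mul]
    nlinarith [mul_le_mul_of_nonneg_left h1 hs, mul_le_mul_of_nonneg_left h2 ht]
  · exact upperSemicontinuousOn_ciInf hbdd fun i =>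
      (Continuous.continuousOn (by fun_prop)).upperSemicontinuousOn

end Insertion

/-! ### Doubling of variables -/

section Doubling

variable {E : Type*} [NormedAddCommGroup E] [InnerProductSpace ℝ E]

lemma doubling_identity {α : ℝ} (hα : 0 < α) (x y y' q : E) :
    α / 2 * ‖x - y‖ ^ 2 + α / 2 * ‖x - y'‖ ^ 2 + ⟪q, x⟫ + ‖q‖ ^ 2 / (4 * α)
      = α / 4 * ‖(x - y) + (x - y') + α⁻¹ • q‖ ^ 2 + α / 4 * ‖y - y'‖ ^ 2
        + ⟪q, y + y'⟫ / 2 := by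
  have par := parallelogram_law_with_norm ℝ (x - y) (x - y')
  have e : x - y - (x - y') = -(y - y') := by abel
  rw [e, norm_neg] at par
  rw [norm_add_sq_real, inner_smul_right, norm_smul, Real.norm_of_nonneg (by positivity)]
  have e2 : ⟪x - y + (x - y'), q⟫ = 2 * ⟪q, x⟫ - ⟪q, y + y'⟫ := by
    rw [real_inner_comm]
    simp only [inner_add_right, inner_sub_right]
    ring
  rw [e2]
  field_simp
  linear_combination (-2 * α ^ 2) * par

/-- Existence of slopes in a small ball that avoid a null set of base points: the image of a ball
under an expanding map (up to a factor) is not negligible, so it meets the set where the Lipschitz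
map `G` is differentiable. -/
lemma exists_differentiableAt_of_antilipschitz [FiniteDimensional ℝ E] {G X : E → E}
    {C K : NNReal} (hG : LipschitzWith C G) (hX : AntilipschitzWith K X) {δ : ℝ} (hδ : 0 < δ) :
    ∃ q, ‖q‖ ≤ δ ∧ DifferentiableAt ℝ G (X q) := by
  borelize E
  by_contra! hcon
  set d : ℝ := (Module.finrank ℝ E : ℝ)
  have h0 := hG.ae_differentiableAt (μ := MeasureTheory.Measure.hausdorffMeasure d)
  have h1 : MeasureTheory.Measure.hausdorffMeasure d (X '' Metric.closedBall 0 δ) = 0 := by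
    refine MeasureTheory.measure_mono_null ?_ (MeasureTheory.ae_iff.1 h0)
    rintro _ ⟨q, hq, rfl⟩
    exact hcon q (by simpa using hq)
  have h2 := hX.le_hausdorffMeasure_image (d := d) (by positivity) (Metric.closedBall 0 δ)
  rw [h1, mul_zero] at h2
  exact absurd h2 (not_le.2 (Metric.measure_closedBall_pos _ _ hδ))

/-- A substitute for the theorem on sums: after doubling the variables with penalisation
`(α / 4) ‖y - y'‖²` and a small linear perturbation `q`, a maximum point `(y, y')` can be
found at which `u` has a second-order superjet `(p, L)` and `v` a second-order subjet
`(p - q, L)` with the same Hessian `L`, all bounded in terms of `α` and the size `R` of `K`. -/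
lemma exists_doubling_jets [FiniteDimensional ℝ E] {K : Set E} (hK : IsCompact K)
    {u v : E → ℝ} (hu : ContinuousOn u K) (hv : ContinuousOn v K) {x₀ : E} (hx₀ : x₀ ∈ K)
    {R : ℝ} (hR : ∀ x ∈ K, ‖x‖ ≤ R) {α δ : ℝ} (hα : 0 < α) (hδ : 0 < δ) :
    ∃ (q p y y' : E) (L : E →L[ℝ] E), ‖q‖ ≤ δ ∧ y ∈ K ∧ y' ∈ K ∧ ‖p‖ ≤ 2 * α * R + δ ∧
      ‖L‖ ≤ 3 * α ∧ (∀ a b, ⟪L a, b⟫ = ⟪a, L b⟫) ∧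
      u x₀ - v x₀ - ⟪q, x₀⟫ ≤ u y - v y' - α / 4 * ‖y - y'‖ ^ 2 - ⟪q, y + y'⟫ / 2 ∧
      (∀ ε > 0, ∃ r > 0, ∀ z : E, ‖z‖ < r → y + z ∈ K →
        u (y + z) ≤ u y + ⟪p, z⟫ + (1 / 2) * ⟪L z, z⟫ + ε * ‖z‖ ^ 2) ∧
      (∀ ε > 0, ∃ r > 0, ∀ z : E, ‖z‖ < r → y' + z ∈ K →
        v y' + ⟪p - q, z⟫ + (1 / 2) * ⟪L z, z⟫ - ε * ‖z‖ ^ 2 ≤ v (y' + z)) := by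
  have hR0 : 0 ≤ R := (norm_nonneg _).trans (hR x₀ hx₀)
  have hinner : ∀ q y : E, ‖q‖ ≤ δ → ‖y‖ ≤ R → |⟪q, y⟫| ≤ δ * R := fun q y hq hy =>
    (abs_real_inner_le_norm q y).trans (by gcongr)
  -- Maximum points of the doubled functional, for every slope `q`.
  have hmax : ∀ q : E, ∃ y ∈ K, ∃ y' ∈ K, ∀ w ∈ K, ∀ w' ∈ K,
      u w - v w' - α / 4 * ‖w - w'‖ ^ 2 - ⟪q, w + w'⟫ / 2
        ≤ u y - v y' - α / 4 * ‖y - y'‖ ^ 2 - ⟪q, y + y'⟫ / 2 := by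
    intro q
    have hc : ContinuousOn (fun w : E × E => u w.1 - v w.2 - α / 4 * ‖w.1 - w.2‖ ^ 2
        - ⟪q, w.1 + w.2⟫ / 2) (K ×ˢ K) := by
      refine ContinuousOn.sub (ContinuousOn.sub (ContinuousOn.sub ?_ ?_) ?_) ?_
      · exact hu.comp continuousOn_fst fun w hw => hw.1
      · exact hv.comp continuousOn_snd fun w hw => hw.2
      · exact Continuous.continuousOn (by fun_prop)
      · exact Continuous.continuousOn (by fun_prop)
    obtain ⟨⟨y, y'⟩, hy, hm⟩ := (hK.prod hK).exists_isMaxOn ⟨(x₀, x₀), hx₀, hx₀⟩ hc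
    exact ⟨y, hy.1, y', hy.2, fun w hw w' hw' => hm (Set.mk_mem_prod hw hw')⟩
  choose y hy y' hy' hyy using hmax
  let c : E → ℝ := fun q => u (y q) - v (y' q) - α / 4 * ‖y q - y' q‖ ^ 2 - ⟪q, y q + y' q⟫ / 2
  have hc : ∀ q, ∀ w ∈ K, ∀ w' ∈ K,
      u w - v w' - α / 4 * ‖w - w'‖ ^ 2 - ⟪q, w + w'⟫ / 2 ≤ c q := hyy
  have hcx₀ : ∀ q, u x₀ - v x₀ - ⟪q, x₀⟫ ≤ c q := by
    intro q
    have := hc q x₀ hx₀ x₀ hx₀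
    rw [inner_add_right, sub_self, norm_zero] at this
    linarith
  obtain ⟨C, hC⟩ := hK.exists_bound_of_continuousOn hv
  -- `κ + (α / 4) ‖·‖²` is the infimum, over `‖q‖ ≤ δ` and `w' ∈ K`, of the upper bounds for `u`
  -- that express the maximality of `c q`.
  let ι := {i : E × E // ‖i.1‖ ≤ δ ∧ i.2 ∈ K}
  have : Nonempty ι := ⟨⟨(0, x₀), by simpa using hδ.le, hx₀⟩⟩
  let a : ι → ℝ := fun i => v i.1.2 + α / 4 * ‖i.1.2‖ ^ 2 + ⟪i.1.1, i.1.2⟫ / 2 + c i.1.1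
  let b : ι → E := fun i => (1 / 2 : ℝ) • i.1.1 - (α / 2) • i.1.2
  have hab : ∀ (i : ι) (w : E), a i + ⟪b i, w⟫ + α / 4 * ‖w‖ ^ 2
      = v i.1.2 + α / 4 * ‖w - i.1.2‖ ^ 2 + ⟪i.1.1, w + i.1.2⟫ / 2 + c i.1.1 := by
    intro i w
    simp only [a, b]
    rw [norm_sub_sq_real, inner_sub_left, inner_smul_left, inner_smul_left, inner_add_right]
    simp only [conj_trivial]
    linear_combination (-α / 2) * real_inner_comm w i.1.2
  have hm : ∀ i : ι, ∀ w ∈ Metric.closedBall (0 : E) R,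
      -C - 2 * (δ * R) + (u x₀ - v x₀) - α / 4 * R ^ 2 ≤ a i + ⟪b i, w⟫ := by
    intro i w hw
    rw [mem_closedBall_zero_iff] at hw
    have h1 := hab i w
    have h2 := (abs_le.1 (hC _ i.2.2)).1
    have h3 := (abs_le.1 (hinner _ _ i.2.1 hw)).1
    have h4 := (abs_le.1 (hinner _ _ i.2.1 (hR _ i.2.2))).1
    have h5 := (abs_le.1 (hinner _ _ i.2.1 (hR _ hx₀))).2
    have h6 := hcx₀ i.1.1
    have h7 : α / 4 * ‖w‖ ^ 2 ≤ α / 4 * R ^ 2 := by gcongr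
    have h8 : 0 ≤ α / 4 * ‖w - i.1.2‖ ^ 2 := by positivity
    rw [inner_add_right] at h1
    linarith
  obtain ⟨hconc, husc⟩ := concave_usc_ciInf (convex_closedBall (0 : E) R) a b _ hm
  obtain ⟨h, Y, hYB, hhle, hheq, htwo⟩ := exists_two_sided (isCompact_closedBall (0 : E) R)
    ⟨0, by simpa using hR0⟩ hconc husc hα
  have hKB : ∀ w ∈ K, w ∈ Metric.closedBall (0 : E) R := fun w hw => by simpa using hR w hw
  have hlow : ∀ x, ∀ w ∈ K, u w - α / 2 * ‖x - w‖ ^ 2 ≤ h x := by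
    intro x w hw
    have h1 := hhle x w (hKB w hw)
    have h2 : u w - α / 4 * ‖w‖ ^ 2 ≤ ⨅ i, (a i + ⟪b i, w⟫) := le_ciInf fun i => by
      have h3 := hc i.1.1 w hw i.1.2 i.2.2
      have h4 := hab i w
      linarith
    linarith
  have hup : ∀ x q, ‖q‖ ≤ δ → ∀ w' ∈ K,
      h x ≤ v w' + α / 2 * ‖x - w'‖ ^ 2 + ⟪q, x⟫ + ‖q‖ ^ 2 / (4 * α) + c q := by
    intro x q hq w' hw'
    have h1 : (⨅ i, (a i + ⟪b i, Y x⟫)) ≤ _ :=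
      ciInf_le ⟨_, by rintro _ ⟨i, rfl⟩; exact hm i (Y x) (hYB x)⟩ (⟨(q, w'), hq, hw'⟩ : ι)
    have h2 := hab ⟨(q, w'), hq, hw'⟩ (Y x)
    have h3 := doubling_identity hα x (Y x) w' q
    have h4 : 0 ≤ α / 4 * ‖(x - Y x) + (x - w') + α⁻¹ • q‖ ^ 2 := by positivity
    have h5 := hheq x
    simp only at h2
    linarith
  -- The touching point attached to the slope `q`; the assignment `q ↦ X q` is expanding.
  let X : E → E := fun q => (1 / 2 : ℝ) • (y q + y' q) - (1 / (2 * α)) • q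
  have hXanti : AntilipschitzWith (2 * α).toNNReal X := by
    refine AntilipschitzWith.of_le_mul_dist fun q₁ q₂ => ?_
    rw [Real.coe_toNNReal _ (by positivity), dist_eq_norm, dist_eq_norm]
    have h1 := hc q₂ _ (hy q₁) _ (hy' q₁)
    have h2 := hc q₁ _ (hy q₂) _ (hy' q₂)
    simp only [c] at h1 h2
    have e : X q₁ - X q₂ = (1 / 2 : ℝ) • ((y q₁ + y' q₁) - (y q₂ + y' q₂))
        - (1 / (2 * α)) • (q₁ - q₂) := by
      simp only [X]
      module
    have h3 : ⟪q₁ - q₂, X q₁ - X q₂⟫ ≤ - (1 / (2 * α)) * ‖q₁ - q₂‖ ^ 2 := by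
      rw [e, inner_sub_right, inner_smul_right, inner_smul_right, real_inner_self_eq_norm_sq]
      rw [inner_sub_left, inner_sub_right, inner_sub_right]
      linarith
    have h4 := (abs_le.1 (abs_real_inner_le_norm (q₁ - q₂) (X q₁ - X q₂))).1
    have h5 : ‖q₁ - q₂‖ ^ 2 ≤ 2 * α * (‖q₁ - q₂‖ * ‖X q₁ - X q₂‖) := by
      have : 1 / (2 * α) * ‖q₁ - q₂‖ ^ 2 ≤ ‖q₁ - q₂‖ * ‖X q₁ - X q₂‖ := by linarith
      rw [one_div, inv_mul_le_iff₀ (by positivity)] at this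
      exact this
    rcases (norm_nonneg (q₁ - q₂)).eq_or_lt with h0 | h0
    · rw [← h0]; positivity
    · nlinarith
  let G : E → E := fun x => α • (Y x - x)
  have hGlip : LipschitzWith (3 * α).toNNReal G := by
    refine LipschitzWith.of_dist_le_mul fun x w => ?_
    rw [Real.coe_toNNReal _ (by positivity), dist_eq_norm, dist_eq_norm]
    have := norm_sub_le_of_two_sided (G := G) (half_pos hα) htwo x w
    linarith
  obtain ⟨q, hq, hdiff⟩ := exists_differentiableAt_of_antilipschitz hGlip hXanti hδ
  obtain ⟨hsymm, hexp⟩ := second_order_expansion (G := G)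
    (hasFDerivAt_of_two_sided htwo) hdiff.hasFDerivAt
  have hRX : ‖X q‖ ≤ R + 1 / (2 * α) * δ := by
    refine (norm_sub_le _ _).trans (add_le_add ?_ ?_)
    · rw [norm_smul, Real.norm_of_nonneg (by norm_num)]
      linarith [norm_add_le (y q) (y' q), hR _ (hy q), hR _ (hy' q)]
    · rw [norm_smul, Real.norm_of_nonneg (by positivity)]
      gcongr
  -- At `X q` the function `h` touches both the lower and the upper bound.
  have hid : α / 2 * ‖X q - y q‖ ^ 2 + α / 2 * ‖X q - y' q‖ ^ 2 + ⟪q, X q⟫ + ‖q‖ ^ 2 / (4 * α)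
      = α / 4 * ‖y q - y' q‖ ^ 2 + ⟪q, y q + y' q⟫ / 2 := by
    rw [doubling_identity hα]
    have : (X q - y q) + (X q - y' q) + α⁻¹ • q = 0 := by
      have e1 : (X q - y q) + (X q - y' q) + α⁻¹ • q
          = (α⁻¹ - 2 * (1 / (2 * α))) • q := by
        simp only [X]
        module
      rw [e1]
      have : α⁻¹ - 2 * (1 / (2 * α)) = 0 := by field_simp; ring
      rw [this, zero_smul]
    rw [this, norm_zero]
    ring
  have hl0 := hlow (X q) (y q) (hy q)
  have hu0 := hup (X q) q hq (y' q) (hy' q)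
  have hcq : c q = u (y q) - v (y' q) - α / 4 * ‖y q - y' q‖ ^ 2 - ⟪q, y q + y' q⟫ / 2 := rfl
  refine ⟨q, G (X q), y q, y' q, fderiv ℝ G (X q), hq, hy q, hy' q, ?_, ?_, hsymm, hcx₀ q, ?_, ?_⟩
  · have h1 : ‖Y (X q)‖ ≤ R := by simpa using hYB (X q)
    have h2 : ‖Y (X q) - X q‖ ≤ 2 * R + 1 / (2 * α) * δ := (norm_sub_le _ _).trans (by linarith)
    simp only [G]
    rw [norm_smul, Real.norm_of_nonneg hα.le]
    have h3 := mul_le_mul_of_nonneg_left h2 hα.le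
    have h4 : α * (2 * R + 1 / (2 * α) * δ) = 2 * α * R + δ / 2 := by field_simp
    linarith
  · have := norm_fderiv_le_of_lipschitz ℝ (x₀ := X q) hGlip
    rwa [Real.coe_toNNReal _ (by positivity)] at this
  · intro ε hε
    obtain ⟨r, hr, hr'⟩ := hexp ε hε
    refine ⟨r, hr, fun z hz hzK => ?_⟩
    have h1 := (abs_le.1 (hr' z hz)).2
    have h2 := hlow (X q + z) (y q + z) hzK
    rw [add_sub_add_right_eq_sub] at h2
    linarith
  · intro ε hε
    obtain ⟨r, hr, hr'⟩ := hexp ε hε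
    refine ⟨r, hr, fun z hz hzK => ?_⟩
    have h1 := (abs_le.1 (hr' z hz)).1
    have h2 := hup (X q + z) q hq (y' q + z) hzK
    rw [add_sub_add_right_eq_sub, inner_add_right] at h2
    rw [inner_sub_left]
    linarith

end Doubling

/-! ### The comparison principle -/

/-- comparison principle: let `F = F(r,p,X)` be continuous, non-decreasing
in `X` and strictly decreasing in `r` at rate `γ > 0`, and `f` continuous. If
`u ∈ C⁰(Ω̄)` is a viscosity solution of `F(u,Du,D²u) ≥ f` and `v ∈ C⁰(Ω̄)` is a viscosity
solution of `F(v,Dv,D²v) ≤ f` on the bounded open set `Ω`, then `u ≤ v` on `∂Ω` implies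
`u ≤ v` on `Ω̄`. -/
theorem stmt_17 {n : ℕ} (Ω : Set (EuclideanSpace ℝ (Fin n)))
    (hΩo : IsOpen Ω) (hΩb : Bornology.IsBounded Ω)
    (F : ℝ × EuclideanSpace ℝ (Fin n) × Matrix (Fin n) (Fin n) ℝ → ℝ)
    (hFc : Continuous F)
    (hFell : ∀ r p X Y, Matrix.IsSymm X → Matrix.IsSymm Y → (Y - X).PosSemidef →
      F (r, p, X) ≤ F (r, p, Y))
    (γ : ℝ) (hγ : 0 < γ)
    (hFmono : ∀ r s p X, r ≤ s → F (s, p, X) + γ * (s - r) ≤ F (r, p, X))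
    (f : EuclideanSpace ℝ (Fin n) → ℝ) (hf : ContinuousOn f (closure Ω))
    (u v : EuclideanSpace ℝ (Fin n) → ℝ)
    (hu : ContinuousOn u (closure Ω)) (hv : ContinuousOn v (closure Ω))
    (husub : ∀ x ∈ Ω, ∀ p X, J2plus Ω u x p X → f x ≤ F (u x, p, X))
    (hvsup : ∀ x ∈ Ω, ∀ p X, J2minus Ω v x p X → F (v x, p, X) ≤ f x)
    (hbd : ∀ x ∈ frontier Ω, u x ≤ v x) :
    ∀ x ∈ closure Ω, u x ≤ v x := by
  intro x₀ hx₀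
  by_contra hcon
  push Not at hcon
  set K := closure Ω with hKdef
  have hK : IsCompact K := hΩb.isCompact_closure
  obtain ⟨R, hR⟩ := hK.isBounded.exists_norm_le
  have hR0 : 0 ≤ R := (norm_nonneg _).trans (hR x₀ hx₀)
  obtain ⟨Cu, hCu⟩ := hK.exists_bound_of_continuousOn hu
  obtain ⟨Cv, hCv⟩ := hK.exists_bound_of_continuousOn hv
  have hCu0 : 0 ≤ Cu := (norm_nonneg _).trans (hCu x₀ hx₀)
  have hCv0 : 0 ≤ Cv := (norm_nonneg _).trans (hCv x₀ hx₀)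
  set m := u x₀ - v x₀ with hm
  have hm0 : 0 < m := sub_pos.2 hcon
  have huc : ∀ {g : EuclideanSpace ℝ (Fin n) → ℝ}, ContinuousOn g K → ∀ ε > 0, ∃ η > 0,
      ∀ x ∈ K, ∀ y ∈ K, ‖x - y‖ < η → |g x - g y| < ε := by
    intro g hg ε hε
    obtain ⟨η, hη, h⟩ :=
      Metric.uniformContinuousOn_iff.1 (hK.uniformContinuousOn_of_continuous hg) ε hε
    exact ⟨η, hη, fun x hx y hy hxy => h x hx y hy (by rwa [dist_eq_norm])⟩
  obtain ⟨η₁, hη₁, hη₁u⟩ := huc hu (m / 4) (by positivity)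
  obtain ⟨η₂, hη₂, hη₂v⟩ := huc hv (m / 4) (by positivity)
  obtain ⟨η₃, hη₃, hη₃f⟩ := huc hf (γ * m / 4) (by positivity)
  obtain ⟨η, hη, hηlt⟩ : ∃ η > 0, η ≤ η₁ ∧ η ≤ η₂ ∧ η ≤ η₃ :=
    ⟨min η₁ (min η₂ η₃), by positivity, by simp, by simp, by simp⟩
  -- This choice of `α` forces `‖y - y'‖ < η` at the maximum points.
  set α : ℝ := 4 * (Cu + Cv + 1) / η ^ 2 with hα
  have hα0 : 0 < α := by positivity
  -- With `α` fixed, all relevant gradients and Hessians stay in a compact set, on which `F` is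
  -- uniformly continuous; this determines the size `δ` of the linear perturbation.
  let M : (EuclideanSpace ℝ (Fin n) →L[ℝ] EuclideanSpace ℝ (Fin n)) →ₗ[ℝ]
      Matrix (Fin n) (Fin n) ℝ :=
    (Matrix.toEuclideanLin (𝕜 := ℝ) (m := Fin n) (n := Fin n)).symm.toLinearMap ∘ₗ
      ContinuousLinearMap.coeLM ℝ
  have hMc : Continuous M := LinearMap.continuous_of_finiteDimensional M
  have hMquad : ∀ L z, quadForm (M L) z = ⟪L z, z⟫ := by
    intro L z
    simp [quadForm, M]
  have hMsymm : ∀ L : EuclideanSpace ℝ (Fin n) →L[ℝ] EuclideanSpace ℝ (Fin n),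
      (∀ a b, ⟪L a, b⟫ = ⟪a, L b⟫) → (M L).IsSymm := by
    intro L hL
    have : (Matrix.toEuclideanLin (M L)).IsSymmetric := by
      intro a b
      simpa [M] using hL a b
    simpa [Matrix.IsHermitian, Matrix.IsSymm] using Matrix.isSymmetric_toEuclideanLin_iff.1 this
  have hF'c : Continuous fun w : ℝ × EuclideanSpace ℝ (Fin n) ×
      (EuclideanSpace ℝ (Fin n) →L[ℝ] EuclideanSpace ℝ (Fin n)) => F (w.1, w.2.1, M w.2.2) :=
    hFc.comp (by fun_prop)
  have hS : IsCompact (Metric.closedBall (0 : ℝ) Cv ×ˢ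
      Metric.closedBall (0 : EuclideanSpace ℝ (Fin n)) (2 * α * R + 2) ×ˢ
      Metric.closedBall
        (0 : EuclideanSpace ℝ (Fin n) →L[ℝ] EuclideanSpace ℝ (Fin n)) (3 * α)) :=
    (isCompact_closedBall _ _).prod ((isCompact_closedBall _ _).prod (isCompact_closedBall _ _))
  obtain ⟨δ₁, hδ₁, hδ₁F⟩ := Metric.uniformContinuousOn_iff.1
    (hS.uniformContinuousOn_of_continuous hF'c.continuousOn) (γ * m / 4) (by positivity)
  obtain ⟨δ, hδ, hδ1, hδ2, hδ3⟩ : ∃ δ > 0, δ ≤ 1 ∧ δ ≤ δ₁ / 2 ∧ δ ≤ m / (8 * (R + 1)) :=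
    ⟨min 1 (min (δ₁ / 2) (m / (8 * (R + 1)))), by positivity, by simp, by simp, by simp⟩
  have hδR : δ * R ≤ m / 8 := by
    rw [le_div_iff₀ (by positivity)] at hδ3
    nlinarith
  obtain ⟨q, p, y, y', L, hq, hy, hy', hp, hL, hLs, hval, hju, hjv⟩ :=
    exists_doubling_jets hK hu hv hx₀ hR hα0 hδ
  have hin : ∀ w ∈ K, |⟪q, w⟫| ≤ m / 8 := fun w hw =>
    ((abs_real_inner_le_norm q w).trans (by gcongr; exact hR w hw)).trans hδR
  have hval2 : 3 * m / 4 + α / 4 * ‖y - y'‖ ^ 2 ≤ u y - v y' := by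
    rw [inner_add_right] at hval
    have h1 := (abs_le.1 (hin x₀ hx₀)).2
    have h2 := (abs_le.1 (hin y hy)).1
    have h3 := (abs_le.1 (hin y' hy')).1
    linarith
  have hdist : ‖y - y'‖ < η := by
    have h1 := (abs_le.1 (hCu y hy)).2
    have h2 := (abs_le.1 (hCv y' hy')).1
    have h3 : α / 4 * ‖y - y'‖ ^ 2 < α / 4 * η ^ 2 := by
      have : α / 4 * η ^ 2 = Cu + Cv + 1 := by rw [hα]; field_simp
      linarith
    exact lt_of_pow_lt_pow_left₀ 2 hη.le (lt_of_mul_lt_mul_left h3 (by positivity))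
  have hgap : 3 * m / 4 ≤ u y - v y' := by
    have : 0 ≤ α / 4 * ‖y - y'‖ ^ 2 := by positivity
    linarith
  have hmem : ∀ w ∈ K, w ∉ Ω → u w ≤ v w := fun w hw hwΩ =>
    hbd w (by rw [hΩo.frontier_eq]; exact ⟨hw, hwΩ⟩)
  have hyΩ : y ∈ Ω := by
    by_contra hyn
    have h1 := hmem y hy hyn
    have h2 := (abs_lt.1 (hη₂v y hy y' hy' (hdist.trans_le hηlt.2.1))).2
    linarith
  have hyΩ' : y' ∈ Ω := by
    by_contra hyn
    have h1 := hmem y' hy' hyn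
    have h2 := (abs_lt.1 (hη₁u y hy y' hy' (hdist.trans_le hηlt.1))).2
    linarith
  have h1 := husub y hyΩ p (M L) ⟨hMsymm L hLs, fun ε hε => by
    obtain ⟨r, hr, h⟩ := hju ε hε
    exact ⟨r, hr, fun z hz hzΩ => by rw [hMquad]; exact h z hz (subset_closure hzΩ)⟩⟩
  have h2 := hvsup y' hyΩ' (p - q) (M L) ⟨hMsymm L hLs, fun ε hε => by
    obtain ⟨r, hr, h⟩ := hjv ε hε
    exact ⟨r, hr, fun z hz hzΩ => by rw [hMquad]; exact h z hz (subset_closure hzΩ)⟩⟩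
  have h3 := hFmono (v y') (u y) p (M L) (by linarith)
  have h4 := (abs_lt.1 (hη₃f y hy y' hy' (hdist.trans_le hηlt.2.2))).1
  have h5 : |F (v y', p, M L) - F (v y', p - q, M L)| < γ * m / 4 := by
    refine hδ₁F (v y', p, L) ⟨?_, ?_, ?_⟩ (v y', p - q, L) ⟨?_, ?_, ?_⟩ ?_
    · simpa using hCv y' hy'
    · simpa using hp.trans (by linarith)
    · simpa using hL
    · simpa using hCv y' hy'
    · simpa using (norm_sub_le p q).trans (by linarith)
    · simpa using hL
    · have : ‖q‖ < δ₁ := by linarith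
      simpa [Prod.dist_eq, dist_eq_norm, hδ₁] using this
  have h6 := (abs_lt.1 h5).2
  nlinarith [mul_le_mul_of_nonneg_left hgap hγ.le, mul_pos hγ hm0]

end
end
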